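/- Let Q be an irreducible conservative q-matrix on F with the given block structure, and let n ≥ 1. Then the LC-block-augmented truncation ₙQ has no closed communicating class that is a subset of F̄_n. -/

import Mathlib

/-!
From a state `x` in a level above `n`, every rate `q x y` of `Q` is dominated by a rate of `ₙQ`: by
the rate to `y` itself if `y` lies in a level `≤ n` or in the level of `x`, and otherwise by the
rate to the state of level `n` with the phase of `y`, to which `ₙQ` redirects that transition. So a
set `C ⊆ F̄_n` that `ₙQ` cannot leave cannot be left by `Q` either, and no state of `F_n` is
reachable from `C` under `Q`.
-/

/-- The block-structured state space `F = ⋃_{k≥0} L_k`, where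
`L_0 = {0} × {0,…,S₀}` and `L_k = {k} × {0,…,S₁}` for `k ≥ 1`. -/
abbrev BState (S0 S1 : ℕ) : Type := {p : ℕ × ℕ // p.2 ≤ if p.1 = 0 then S0 else S1}

/-- A (stable) q-matrix: nonnegative off-diagonal entries, and for each row the
off-diagonal entries are summable with sum at most `-q x x` (finite diagonal). -/
def IsQMatrix {α : Type*} (q : α → α → ℝ) : Prop :=
  (∀ x y : α, x ≠ y → 0 ≤ q x y) ∧
    ∀ x : α, Summable (fun y : {z : α // z ≠ x} => q x (y : α)) ∧
      (∑' y : {z : α // z ≠ x}, q x (y : α)) ≤ - q x x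

/-- A q-matrix is conservative if each of its rows sums to zero. -/
def IsConservative {α : Type*} (q : α → α → ℝ) : Prop :=
  ∀ x : α, (∑' y : {z : α // z ≠ x}, q x (y : α)) = - q x x

/-- Reachability: `y` is reachable from `x` through a chain of positive rates. -/
def Reaches {α : Type*} (q : α → α → ℝ) : α → α → Prop :=
  Relation.ReflTransGen (fun a b => 0 < q a b)

/-- Two states communicate if each is reachable from the other. -/
def Communicates {α : Type*} (q : α → α → ℝ) (x y : α) : Prop :=
  Reaches q x y ∧ Reaches q y x

/-- A communicating class: an equivalence class of the communication relation. -/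
def IsCommClass {α : Type*} (q : α → α → ℝ) (C : Set α) : Prop :=
  ∃ x : α, C = {y | Communicates q x y}

/-- A closed communicating class: no positive rate leads out of it. -/
def IsClosedCommClass {α : Type*} (q : α → α → ℝ) (C : Set α) : Prop :=
  IsCommClass q C ∧ ∀ x ∈ C, ∀ y ∉ C, q x y = 0

/-- Irreducibility: every state is reachable from every state. -/
def IsIrreducibleQ {α : Type*} (q : α → α → ℝ) : Prop :=
  ∀ x y : α, Reaches q x y

/-- The last-column-block-augmented northwest-corner truncation `ₙQ` of `Q`. -/
noncomputable def LCtrunc (S0 S1 n : ℕ) (q : BState S0 S1 → BState S0 S1 → ℝ)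
    (x y : BState S0 S1) : ℝ :=
  if y.1.1 < n then q x y
  else if y.1.1 = n then
    q x y + ∑' m : ℕ,
      if h : (n < m ∧ m ≠ x.1.1) ∧ y.1.2 ≤ (if m = 0 then S0 else S1)
        then q x ⟨(m, y.1.2), h.2⟩ else 0
  else if y.1.1 = x.1.1 then q x y else 0

/-- A set of states that is closed for `q`: all rates out of it vanish. Unlike in
`IsClosedCommClass`, its states need not communicate. -/
def IsClosedUnder {α : Type*} (q : α → α → ℝ) (C : Set α) : Prop :=
  ∀ x ∈ C, ∀ y ∉ C, q x y = 0

lemma IsClosedUnder.mem_of_reaches {α : Type*} {q : α → α → ℝ} {C : Set α}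
    (hC : IsClosedUnder q C) {x y : α} (hx : x ∈ C) (hxy : Reaches q x y) : y ∈ C := by
  induction hxy with
  | refl => exact hx
  | tail _ hpos hmem => exact by_contra fun hy => hpos.ne' (hC _ hmem _ hy)

lemma IsCommClass.nonempty {α : Type*} {q : α → α → ℝ} {C : Set α} (hC : IsCommClass q C) :
    C.Nonempty := by
  obtain ⟨x, rfl⟩ := hC
  exact ⟨x, Relation.ReflTransGen.refl, Relation.ReflTransGen.refl⟩

section Augmentation

variable {S0 S1 n : ℕ} {q : BState S0 S1 → BState S0 S1 → ℝ} {x y z : BState S0 S1}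

/-- The contribution of level `m` to the augmentation term of `LCtrunc` in phase `j`: the rate from
`x` to `(m, j)`, or `0` if `ₙQ` does not redirect level `m` to level `n` or if level `m` has no
phase `j`. -/
noncomputable def redirectedRate (n : ℕ) (q : BState S0 S1 → BState S0 S1 → ℝ)
    (x : BState S0 S1) (j m : ℕ) : ℝ :=
  if h : (n < m ∧ m ≠ x.1.1) ∧ j ≤ (if m = 0 then S0 else S1)
    then q x ⟨(m, j), h.2⟩ else 0

lemma redirectedRate_nonneg (hq : IsQMatrix q) (x : BState S0 S1) (j m : ℕ) :
    0 ≤ redirectedRate n q x j m :=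
  dite_nonneg (fun h => hq.1 _ _ fun hx => h.1.2 (congrArg (·.1.1) hx).symm) fun _ => le_rfl

/-- Without summability the `tsum` in `LCtrunc` would be the junk value `0`. -/
lemma summable_redirectedRate (hq : IsQMatrix q) (x : BState S0 S1) (j : ℕ) :
    Summable (redirectedRate n q x j) := by
  let s : Set ℕ := {m | (n < m ∧ m ≠ x.1.1) ∧ j ≤ (if m = 0 then S0 else S1)}
  let target : s → {z // z ≠ x} := fun m =>
    ⟨⟨(m, j), m.2.2⟩, fun hx => m.2.1.2 (congrArg (·.1.1) hx)⟩
  have target_injective : Function.Injective target := fun a b hab =>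
    Subtype.ext (congrArg (·.1.1.1) hab)
  have restrict_eq : redirectedRate n q x j ∘ ((↑) : s → ℕ) = (fun z => q x z.1) ∘ target :=
    funext fun m => dif_pos m.2
  have eq_zero_of_notMem : ∀ m ∉ Set.range ((↑) : s → ℕ), redirectedRate n q x j m = 0 :=
    fun m hm => dif_neg fun h => hm ⟨⟨m, h⟩, rfl⟩
  rw [← Subtype.val_injective.summable_iff eq_zero_of_notMem, restrict_eq]
  exact (hq.2 x).1.comp_injective target_injective

lemma LCtrunc_of_level_eq (hy : y.1.1 = n) :
    LCtrunc S0 S1 n q x y = q x y + ∑' m, redirectedRate n q x y.1.2 m := by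
  simp only [LCtrunc, hy, lt_irrefl, if_false, if_true, redirectedRate]

lemma le_LCtrunc_of_level_le_or_eq (hq : IsQMatrix q) (hy : y.1.1 ≤ n ∨ y.1.1 = x.1.1) :
    q x y ≤ LCtrunc S0 S1 n q x y := by
  by_cases hyn : y.1.1 = n
  · rw [LCtrunc_of_level_eq hyn]
    exact le_add_of_nonneg_right (tsum_nonneg (redirectedRate_nonneg hq x _))
  · have hy' : y.1.1 < n ∨ y.1.1 = x.1.1 := hy.imp_left fun h => lt_of_le_of_ne h hyn
    rw [LCtrunc, if_neg hyn, ← ite_or, if_pos hy']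

lemma le_LCtrunc_of_redirected (hq : IsQMatrix q) (hny : n < y.1.1) (hyx : y.1.1 ≠ x.1.1)
    (hz : z.1.1 = n) (hzy : z.1.2 = y.1.2) (hxz : x ≠ z) :
    q x y ≤ LCtrunc S0 S1 n q x z :=
  calc q x y
    _ = redirectedRate n q x y.1.2 y.1.1 := by rw [redirectedRate, dif_pos ⟨⟨hny, hyx⟩, y.2⟩]
    _ ≤ ∑' m, redirectedRate n q x y.1.2 m :=
      (summable_redirectedRate hq x _).le_tsum _ fun m _ => redirectedRate_nonneg hq x _ m
    _ ≤ q x z + ∑' m, redirectedRate n q x y.1.2 m := le_add_of_nonneg_left (hq.1 x z hxz)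
    _ = LCtrunc S0 S1 n q x z := by rw [LCtrunc_of_level_eq hz, hzy]

lemma exists_level_eq_phase_eq (hn : 1 ≤ n) (hy : y.1.1 ≠ 0) :
    ∃ z : BState S0 S1, z.1.1 = n ∧ z.1.2 = y.1.2 := by
  have hphase : y.1.2 ≤ S1 := by simpa only [if_neg hy] using y.2
  exact ⟨⟨(n, y.1.2), by rwa [if_neg (Nat.one_le_iff_ne_zero.1 hn)]⟩, rfl, rfl⟩

lemma IsClosedUnder.of_LCtrunc (hq : IsQMatrix q) (hn : 1 ≤ n) {C : Set (BState S0 S1)}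
    (hC : IsClosedUnder (LCtrunc S0 S1 n q) C) (hCn : C ⊆ {x : BState S0 S1 | n < x.1.1}) :
    IsClosedUnder q C := by
  intro x hx y hy
  refine le_antisymm ?_ (hq.1 x y (ne_of_mem_of_not_mem hx hy))
  by_cases hlevel : y.1.1 ≤ n ∨ y.1.1 = x.1.1
  · exact (le_LCtrunc_of_level_le_or_eq hq hlevel).trans_eq (hC x hx y hy)
  · obtain ⟨hny, hyx⟩ : n < y.1.1 ∧ y.1.1 ≠ x.1.1 := by
      simpa only [not_or, not_le] using hlevel
    obtain ⟨z, hz, hzy⟩ := exists_level_eq_phase_eq hn hny.ne_bot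
    have hzC : z ∉ C := fun h => (hCn h).ne' hz
    exact (le_LCtrunc_of_redirected hq hny hyx hz hzy (ne_of_mem_of_not_mem hx hzC)).trans_eq
      (hC x hx z hzC)

end Augmentation

theorem stmt1_general {S0 S1 n : ℕ} {q : BState S0 S1 → BState S0 S1 → ℝ}
    (hq : IsQMatrix q) (hn : 1 ≤ n) {C : Set (BState S0 S1)}
    (hC : IsClosedUnder (LCtrunc S0 S1 n q) C)
    (hreach : ∃ x ∈ C, ∃ y : BState S0 S1, y.1.1 ≤ n ∧ Reaches q x y) :
    ¬ C ⊆ {x : BState S0 S1 | n < x.1.1} := by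
  intro hCn
  obtain ⟨x, hx, y, hy, hxy⟩ := hreach
  have hyC : y ∈ C := (hC.of_LCtrunc hq hn hCn).mem_of_reaches hx hxy
  exact (hCn hyC).not_ge hy

/-- The LC-block-augmented truncation of an irreducible conservative q-matrix has
no closed communicating class contained in `F̄_n`. -/
theorem stmt1 (S0 S1 : ℕ) (q : BState S0 S1 → BState S0 S1 → ℝ)
    (hq : IsQMatrix q) (hcons : IsConservative q) (hirr : IsIrreducibleQ q)
    (n : ℕ) (hn : 1 ≤ n) :
    ∀ C : Set (BState S0 S1), IsClosedCommClass (LCtrunc S0 S1 n q) C →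
      ¬ C ⊆ {x : BState S0 S1 | n < x.1.1} := by
  rintro C ⟨hclass, hclosed⟩
  exact stmt1_general hq hn hclosed <| hclass.nonempty.imp fun x hx =>
    ⟨hx, ⟨(0, 0), Nat.zero_le _⟩, Nat.zero_le _, hirr _ _⟩
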